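/- Let M = {m1, m2, m3}, W = {w1, w2, w3}, and let P be the preference profile in which every agent ranks being unmatched last and: m1 ranks w1, w2, w3; m2 ranks w1, w3, w2; m3 ranks w2, w1, w3; w1 ranks m3, m2, m1; w2 ranks m2, m1, m3; w3 ranks m3, m2, m1. Suppose μ is a random matching (a probability distribution over the six perfect matchings of M with W) such that for every agent a, the rank P_a(μ(a)) weakly first-order stochastically dominates the rank of a's partner under the uniform distribution over the six perfect matchings. Then Pr(μ = {m1w1, m2w2, m3w3}) = Pr(μ = {m1w2, m2w3, m3w1}) = Pr(μ = {m1w3, m2w1, m3w2}) and Pr(μ = {m1w1, m2w3, m3w2}) = Pr(μ = {m1w2, m2w1, m3w3}) = Pr(μ = {m1w3, m2w2, m3w1}); consequently every agent receives their first, second, and third choice each with probability exactly 1/3, so μ does not strictly dominate the uniform random matching for any agent. -/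

import Mathlib

open scoped ENNReal

namespace Unraveling

variable (M W : Type*) [Fintype M] [DecidableEq M] [Fintype W] [DecidableEq W]

/-- A matching between men `M` and women `W`.  `Sum.inl m` denotes man `m`,
`Sum.inr w` denotes woman `w`; `toFun a = a` means agent `a` is unmatched. -/
structure Matching where
  toFun : M ⊕ W → M ⊕ W
  man_range : ∀ m : M, toFun (Sum.inl m) = Sum.inl m ∨ ∃ w : W, toFun (Sum.inl m) = Sum.inr w
  woman_range : ∀ w : W, toFun (Sum.inr w) = Sum.inr w ∨ ∃ m : M, toFun (Sum.inr w) = Sum.inl m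
  mutual_cond : ∀ (m : M) (w : W), toFun (Sum.inl m) = Sum.inr w ↔ toFun (Sum.inr w) = Sum.inl m

/-- A preference profile: each man has a ranking (a bijection onto `{1,…,|W|+1}`,
encoded as an `Equiv` onto `Fin (|W|+1)`) of the women together with the option
(`none`) of remaining unmatched, and symmetrically for women. -/
structure Profile where
  mpref : M → (Option W ≃ Fin (Fintype.card W + 1))
  wpref : W → (Option M ≃ Fin (Fintype.card M + 1))

variable {M W}

/-- The partner of man `m` under matching `μ` (`none` if unmatched). -/
def Matching.partnerM (μ : Matching M W) (m : M) : Option W :=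
  match μ.toFun (Sum.inl m) with
  | Sum.inl _ => none
  | Sum.inr w => some w

/-- The partner of woman `w` under matching `μ` (`none` if unmatched). -/
def Matching.partnerW (μ : Matching M W) (w : W) : Option M :=
  match μ.toFun (Sum.inr w) with
  | Sum.inr _ => none
  | Sum.inl m => some m

/-- The rank (`1` = most preferred) that man `m` assigns to `o` under profile `P`. -/
def mrank (P : Profile M W) (m : M) (o : Option W) : ℕ := (P.mpref m o : ℕ) + 1

/-- The rank (`1` = most preferred) that woman `w` assigns to `o` under profile `P`. -/
def wrank (P : Profile M W) (w : W) (o : Option M) : ℕ := (P.wpref w o : ℕ) + 1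

/-- The rank that agent `a` assigns to his/her partner under matching `μ`. -/
def prank (P : Profile M W) (μ : Matching M W) : M ⊕ W → ℕ
  | Sum.inl m => mrank P m (μ.partnerM m)
  | Sum.inr w => wrank P w (μ.partnerW w)

/-- The rank that agent `a` assigns to remaining unmatched. -/
def urank (P : Profile M W) : M ⊕ W → ℕ
  | Sum.inl m => mrank P m none
  | Sum.inr w => wrank P w none

/-- Stability of a matching at a profile. -/
def IsStable (P : Profile M W) (μ : Matching M W) : Prop :=
  (∀ a : M ⊕ W, prank P μ a ≤ urank P a) ∧
  (∀ (m : M) (w : W), mrank P m (some w) < prank P μ (Sum.inl m) →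
     prank P μ (Sum.inr w) < wrank P w (some m))

/-- A mechanism maps each preference profile to a probability distribution over matchings. -/
abbrev Mechanism (M W : Type*) [Fintype M] [DecidableEq M] [Fintype W] [DecidableEq W] :=
  Profile M W → PMF (Matching M W)

/-- The probability that `p` assigns to the set `s`. -/
noncomputable def prob {α : Type*} (p : PMF α) (s : Set α) : ℝ≥0∞ :=
  ∑' x, s.indicator (fun y => p y) x

/-- CDF of the rank that agent `a` assigns to his/her random partner, when the
matching is drawn from `p` and the profile is `P`. -/
noncomputable def cdfAt (P : Profile M W) (p : PMF (Matching M W)) (a : M ⊕ W) (n : ℕ) : ℝ≥0∞ :=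
  prob p {μ | prank P μ a ≤ n}

/-- `SD F G` : the rank distribution with CDF `F` strictly first-order
stochastically dominates the one with CDF `G`. -/
def SD (F G : ℕ → ℝ≥0∞) : Prop := (∀ n, G n ≤ F n) ∧ ∃ n, G n < F n

/-- A coalition consisting of at most one man and at most one woman. -/
def IsPairCoalition (A' : Set (M ⊕ W)) : Prop :=
  {m : M | Sum.inl m ∈ A'}.Subsingleton ∧ {w : W | Sum.inr w ∈ A'}.Subsingleton

/-- Coalition `A'` blocks mechanism `φ` ex-post at profile `P`. -/
def BlocksExPost (A' : Set (M ⊕ W)) (φ : Mechanism M W) (P : Profile M W) : Prop :=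
  A'.Nonempty ∧ ∃ φ' : Mechanism M W,
    (∀ a ∈ A', prob (φ' P) {μ | μ.toFun a ∈ A'} = 1) ∧
    (∀ a ∈ A', SD (cdfAt P (φ' P) a) (cdfAt P (φ P) a))

def ExPostStable (φ : Mechanism M W) : Prop :=
  ∀ (P : Profile M W) (A' : Set (M ⊕ W)), ¬ BlocksExPost A' φ P

def ExPostPairwiseStable (φ : Mechanism M W) : Prop :=
  ∀ (P : Profile M W) (A' : Set (M ⊕ W)), IsPairCoalition A' → ¬ BlocksExPost A' φ P

/-- Ex-ante CDF of the rank of agent `a`'s partner under mechanism `φ`, when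
the profile is drawn from prior `ψ`. -/
noncomputable def cdfExAnte (ψ : PMF (Profile M W)) (φ : Mechanism M W) (a : M ⊕ W) (n : ℕ) : ℝ≥0∞ :=
  ∑' P, ψ P * cdfAt P (φ P) a n

/-- Coalition `A'` blocks mechanism `φ` ex-ante at prior `ψ`. -/
def BlocksExAnte (A' : Set (M ⊕ W)) (φ : Mechanism M W) (ψ : PMF (Profile M W)) : Prop :=
  A'.Nonempty ∧ ∃ φ' : Mechanism M W,
    (∀ a ∈ A', (∑' P, ψ P * prob (φ' P) {μ | μ.toFun a ∈ A'}) = 1) ∧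
    (∀ a ∈ A', SD (cdfExAnte ψ φ' a) (cdfExAnte ψ φ a))

def ExAnteStableAt (φ : Mechanism M W) (ψ : PMF (Profile M W)) : Prop :=
  ∀ A' : Set (M ⊕ W), ¬ BlocksExAnte A' φ ψ

def ExAnteStable (φ : Mechanism M W) : Prop := ∀ ψ, ExAnteStableAt φ ψ

def ExAntePairwiseStable (φ : Mechanism M W) : Prop :=
  ∀ (ψ : PMF (Profile M W)) (A' : Set (M ⊕ W)), IsPairCoalition A' → ¬ BlocksExAnte A' φ ψ

/-- `prefEq P P' a` : profiles `P` and `P'` give agent `a` the same preferences. -/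
def prefEq (P P' : Profile M W) : M ⊕ W → Prop
  | Sum.inl m => P.mpref m = P'.mpref m
  | Sum.inr w => P.wpref w = P'.wpref w

/-- The event `Y_a(P̃_a)`: profiles in which `a`'s preferences agree with `Pt`
and every other member of the coalition `A'` has preferences in his/her
acceptance set `R`. -/
def interimEvent (A' : Set (M ⊕ W)) (R : (M ⊕ W) → Set (Profile M W)) (a : M ⊕ W)
    (Pt : Profile M W) : Set (Profile M W) :=
  {P | prefEq P Pt a ∧ ∀ a' ∈ A', a' ≠ a → P ∈ R a'}

/-- CDF of the rank of `a`'s partner under `φ`, with the profile drawn from `ψ`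
conditioned on the event `Y`. -/
noncomputable def cdfCond (ψ : PMF (Profile M W)) (Y : Set (Profile M W)) (φ : Mechanism M W)
    (a : M ⊕ W) (n : ℕ) : ℝ≥0∞ :=
  (∑' P, Y.indicator (fun P' => ψ P' * cdfAt P' (φ P') a n) P) / prob ψ Y

/-- Coalition `A'` blocks mechanism `φ` in the interim at prior `ψ`.  Each `R a`
is the set of profiles in which `a`'s preferences are ones at which `a` agrees to
deviate; it is required to depend only on `a`'s own preferences. -/
def BlocksInterim (A' : Set (M ⊕ W)) (φ : Mechanism M W) (ψ : PMF (Profile M W)) : Prop :=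
  A'.Nonempty ∧ ∃ (φ' : Mechanism M W) (R : (M ⊕ W) → Set (Profile M W)),
    (∀ (a : M ⊕ W) (P P' : Profile M W), prefEq P P' a → (P ∈ R a ↔ P' ∈ R a)) ∧
    (∀ a ∈ A', ∀ P : Profile M W, prob (φ' P) {μ | μ.toFun a ∈ A'} = 1) ∧
    (∀ a ∈ A', ∀ Pt : Profile M W,
      Pt ∈ R a ↔ (0 < prob ψ (interimEvent A' R a Pt) ∧
        SD (cdfCond ψ (interimEvent A' R a Pt) φ' a)
           (cdfCond ψ (interimEvent A' R a Pt) φ a))) ∧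
    0 < prob ψ {P | ∀ a ∈ A', P ∈ R a}

def InterimStableAt (φ : Mechanism M W) (ψ : PMF (Profile M W)) : Prop :=
  ∀ A' : Set (M ⊕ W), ¬ BlocksInterim A' φ ψ

def InterimStable (φ : Mechanism M W) : Prop := ∀ ψ, InterimStableAt φ ψ

def InterimPairwiseStable (φ : Mechanism M W) : Prop :=
  ∀ (ψ : PMF (Profile M W)) (A' : Set (M ⊕ W)), IsPairCoalition A' → ¬ BlocksInterim A' φ ψ

/-- `MRanks P m rw ru` : man `m` assigns rank `rw w` to each woman `w` and
rank `ru` to remaining unmatched. -/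
def MRanks (P : Profile M W) (m : M) (rw : W → ℕ) (ru : ℕ) : Prop :=
  (∀ w, mrank P m (some w) = rw w) ∧ mrank P m none = ru

/-- `WRanks P w rm ru` : woman `w` assigns rank `rm m` to each man `m` and
rank `ru` to remaining unmatched. -/
def WRanks (P : Profile M W) (w : W) (rm : M → ℕ) (ru : ℕ) : Prop :=
  (∀ m, wrank P w (some m) = rm m) ∧ wrank P w none = ru

instance (P : Profile M W) (m : M) (rw : W → ℕ) (ru : ℕ) : Decidable (MRanks P m rw ru) :=
  decidable_of_iff ((∀ w, mrank P m (some w) = rw w) ∧ mrank P m none = ru) Iff.rfl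

instance (P : Profile M W) (w : W) (rm : M → ℕ) (ru : ℕ) : Decidable (WRanks P w rm ru) :=
  decidable_of_iff ((∀ m, wrank P w (some m) = rm m) ∧ wrank P w none = ru) Iff.rfl

/-- The perfect matching induced by a bijection `e : M ≃ W`. -/
def matchingOf (e : M ≃ W) : Matching M W where
  toFun a :=
    match a with
    | Sum.inl m => Sum.inr (e m)
    | Sum.inr w => Sum.inl (e.symm w)
  man_range m := Or.inr ⟨e m, rfl⟩
  woman_range w := Or.inr ⟨e.symm w, rfl⟩
  mutual_cond m w := by
    constructor
    · intro h
      simp only [Sum.inr.injEq] at h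
      simp [← h]
    · intro h
      simp only [Sum.inl.injEq] at h
      simp [← h]

/-- `P'` is the permutation of profile `P` obtained by (`σM`, `σW`):
`P_a(a') = P'_{σ(a)}(σ(a'))` for all agents `a` and all `a'` in the domain of `P_a`. -/
def IsPermutedProfile (σM : Equiv.Perm M) (σW : Equiv.Perm W) (P P' : Profile M W) : Prop :=
  (∀ m w, P'.mpref (σM m) (some (σW w)) = P.mpref m (some w)) ∧
  (∀ m, P'.mpref (σM m) none = P.mpref m none) ∧
  (∀ w m, P'.wpref (σW w) (some (σM m)) = P.wpref w (some m)) ∧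
  (∀ w, P'.wpref (σW w) none = P.wpref w none)

/-- Probability (jointly over the profile drawn from `ψ` and the internal
randomization of `φ`) that agent `a` is assigned a partner of rank exactly `k`. -/
noncomputable def probRankEq (ψ : PMF (Profile M W)) (φ : Mechanism M W) (a : M ⊕ W) (k : ℕ) : ℝ≥0∞ :=
  ∑' P, ψ P * prob (φ P) {μ | prank P μ a = k}

/-- CDF of a distribution on ranks `{1,2,3}` with probabilities `q1`, `q2`, `q3`. -/
def cdf3 (q1 q2 q3 : ℝ) (n : ℕ) : ℝ :=
  (if 1 ≤ n then q1 else 0) + (if 2 ≤ n then q2 else 0) + (if 3 ≤ n then q3 else 0)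

/-- Strict first-order stochastic dominance for real-valued rank CDFs. -/
def SDR (F G : ℕ → ℝ) : Prop := (∀ n, G n ≤ F n) ∧ ∃ n, G n < F n

end Unraveling

namespace Unraveling

/-!
If `m` ranks `w` first while `w` ranks `m` last, dominance for `m` bounds the probability of the
pair `m w` from below and dominance for `w` bounds it from above, so a dominating random matching
has the same probability of `m w` as the dominated one. In the example this happens, in one
direction or the other, for the pairs `m1 w1`, `m2 w2`, `m3 w2` and `m3 w3`. The matrix of pair
probabilities is doubly stochastic, and these four entries determine it, so all its entries are
those of the uniform random matching, `1/3`. Each rank of each agent is a single pair, which gives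
the rank distributions. Finally, two perfect matchings of opposite parity share exactly one pair,
and no third one contains that pair, so their probabilities add up to `1/3`; hence the probability
of a perfect matching depends only on its parity.
-/

section Prob

variable {α : Type*} (p : PMF α)

theorem prob_eq_toOuterMeasure (s : Set α) : prob p s = p.toOuterMeasure s :=
  (p.toOuterMeasure_apply s).symm

theorem prob_le_one (s : Set α) : prob p s ≤ 1 :=
  (ENNReal.tsum_le_tsum fun x ↦ Set.indicator_le_self s p x).trans_eq p.tsum_coe

theorem prob_ne_top (s : Set α) : prob p s ≠ ⊤ :=
  ne_top_of_le_ne_top ENNReal.one_ne_top (prob_le_one p s)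

theorem prob_union {s t : Set α} (hst : Disjoint s t) :
    prob p (s ∪ t) = prob p s + prob p t := by
  simp only [prob, Set.indicator_union_of_disjoint hst, ENNReal.tsum_add]

theorem prob_biUnion {ι : Type*} (I : Finset ι) {s : ι → Set α}
    (hs : Pairwise (Function.onFun Disjoint s)) :
    prob p (⋃ i ∈ I, s i) = ∑ i ∈ I, prob p (s i) := by
  simp only [prob]
  rw [← Summable.tsum_finsetSum fun _ _ ↦ ENNReal.summable]
  exact tsum_congr (Finset.indicator_biUnion_apply I s fun i _ j _ hij ↦ hs hij)

theorem prob_singleton (x : α) : prob p {x} = p x := by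
  rw [prob_eq_toOuterMeasure, p.toOuterMeasure_apply_singleton]

variable {p}

theorem prob_congr {s t : Set α} (hst : ∀ x ∈ p.support, x ∈ s ↔ x ∈ t) :
    prob p s = prob p t := by
  rw [prob_eq_toOuterMeasure, prob_eq_toOuterMeasure]
  refine p.toOuterMeasure_apply_eq_of_inter_support_eq (Set.ext fun x ↦ ?_)
  exact and_congr_left (hst x)

theorem prob_eq_one_iff {s : Set α} : prob p s = 1 ↔ ∀ x ∈ p.support, x ∈ s := by
  rw [prob_eq_toOuterMeasure, p.toOuterMeasure_apply_eq_one_iff, Set.subset_def]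

end Prob

section Perfect

variable {M W : Type*}

/-- Perfect matchings: no agent is matched to themselves, the encoding of being unmatched. -/
def Matching.IsPerfect (μ : Matching M W) : Prop := ∀ a, μ.toFun a ≠ a

theorem Matching.toFun_injective :
    Function.Injective (Matching.toFun : Matching M W → M ⊕ W → M ⊕ W) := by
  rintro ⟨⟩ ⟨⟩ rfl
  rfl

theorem matchingOf_injective : Function.Injective (matchingOf : M ≃ W → Matching M W) := by
  intro e f hef
  ext m
  exact Sum.inr.inj (congrArg (fun μ ↦ μ.toFun (Sum.inl m)) hef)

theorem isPerfect_matchingOf (e : M ≃ W) : (matchingOf e).IsPerfect := by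
  rintro (m | w) <;> simp [matchingOf]

theorem Matching.IsPerfect.exists_matchingOf_eq {μ : Matching M W} (hμ : μ.IsPerfect) :
    ∃ e, matchingOf e = μ := by
  choose f hf using fun m ↦ (μ.man_range m).resolve_left (hμ _)
  choose g hg using fun w ↦ (μ.woman_range w).resolve_left (hμ _)
  have hgf (m : M) : g (f m) = m :=
    Sum.inl.inj ((hg (f m)).symm.trans ((μ.mutual_cond m (f m)).1 (hf m)))
  have hfg (w : W) : f (g w) = w :=
    Sum.inr.inj ((hf (g w)).symm.trans ((μ.mutual_cond (g w) w).2 (hg w)))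
  refine ⟨⟨f, g, hgf, hfg⟩, Matching.toFun_injective (funext ?_)⟩
  rintro (m | w)
  exacts [(hf m).symm, (hg w).symm]

end Perfect

section PairProb

variable {M W : Type*}

/-- The probability that the random matching `p` matches man `m` with woman `w`. -/
noncomputable def pairProb (p : PMF (Matching M W)) (m : M) (w : W) : ℝ≥0∞ :=
  prob p {μ | μ.toFun (Sum.inl m) = Sum.inr w}

theorem sum_pairProb_man (p : PMF (Matching M W)) (m : M) (S : Finset W) :
    ∑ w ∈ S, pairProb p m w = prob p {μ | ∃ w ∈ S, μ.toFun (Sum.inl m) = Sum.inr w} := by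
  simp only [pairProb]
  rw [← prob_biUnion p S fun w w' hw ↦ Set.disjoint_left.2 fun μ h h' ↦
    hw (Sum.inr.inj (h.symm.trans h'))]
  congr 1
  ext μ
  simp

theorem sum_pairProb_woman (p : PMF (Matching M W)) (w : W) (S : Finset M) :
    ∑ m ∈ S, pairProb p m w = prob p {μ | ∃ m ∈ S, μ.toFun (Sum.inr w) = Sum.inl m} := by
  simp only [pairProb, Matching.mutual_cond]
  rw [← prob_biUnion p S fun m m' hm ↦ Set.disjoint_left.2 fun μ h h' ↦
    hm (Sum.inl.inj (h.symm.trans h'))]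
  congr 1
  ext μ
  simp

variable {p : PMF (Matching M W)}

theorem pairProb_ne_top {m : M} {w : W} : pairProb p m w ≠ ⊤ :=
  prob_ne_top p _

theorem sum_pairProb_row [Fintype W] (hp : ∀ μ ∈ p.support, μ.IsPerfect) (m : M) :
    ∑ w, pairProb p m w = 1 := by
  rw [sum_pairProb_man, prob_eq_one_iff]
  intro μ hμ
  simpa using (μ.man_range m).resolve_left (hp μ hμ _)

theorem sum_pairProb_col [Fintype M] (hp : ∀ μ ∈ p.support, μ.IsPerfect) (w : W) :
    ∑ m, pairProb p m w = 1 := by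
  rw [sum_pairProb_woman, prob_eq_one_iff]
  intro μ hμ
  simpa using (μ.woman_range w).resolve_left (hp μ hμ _)

theorem pairProb_eq_sum_equiv [Fintype M] [DecidableEq M] [Fintype W] [DecidableEq W]
    (hp : ∀ μ ∈ p.support, μ.IsPerfect) (m : M) (w : W) :
    pairProb p m w = ∑ e : M ≃ W with e m = w, p (matchingOf e) := by
  simp only [← prob_singleton p (matchingOf _)]
  rw [← prob_biUnion p _ fun e f hef ↦
    Set.disjoint_singleton.2 (matchingOf_injective.ne hef)]
  refine prob_congr fun μ hμ ↦ ?_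
  obtain ⟨e, rfl⟩ := (hp μ hμ).exists_matchingOf_eq
  simp only [Set.mem_iUnion, Set.mem_singleton_iff, matchingOf_injective.eq_iff]
  simp [matchingOf]

theorem pairProb_of_uniform [Finite M] [Fintype W] (hp : ∀ μ ∈ p.support, μ.IsPerfect)
    {c : ℝ≥0∞} (hc : ∀ e, p (matchingOf e) = c) (m : M) (w : W) :
    pairProb p m w = (Fintype.card W : ℝ≥0∞)⁻¹ := by
  classical
  cases nonempty_fintype M
  have hsymm (w' : W) : pairProb p m w' = pairProb p m w := by
    simp only [pairProb_eq_sum_equiv hp, hc]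
    refine Finset.sum_equiv (Equiv.equivCongr (Equiv.refl M) (Equiv.swap w' w)) (fun e ↦ ?_)
      fun _ _ ↦ rfl
    simp [Equiv.swap_apply_eq_iff]
  have hsum := sum_pairProb_row hp m
  simp only [hsymm, Finset.sum_const, Finset.card_univ, nsmul_eq_mul] at hsum
  exact ENNReal.eq_inv_of_mul_eq_one_left ((mul_comm _ _).trans hsum)

end PairProb

section Rank

variable {M W : Type*} [Fintype M] [Fintype W]

theorem prank_inl_eq_mrank_iff {P : Profile M W} {μ : Matching M W} {m : M} {w : W} :
    prank P μ (Sum.inl m) = mrank P m (some w) ↔ μ.toFun (Sum.inl m) = Sum.inr w := by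
  obtain h | ⟨w', h⟩ := μ.man_range m <;>
    simp [prank, mrank, Matching.partnerM, h, Fin.val_inj]

theorem prank_inr_eq_wrank_iff {P : Profile M W} {μ : Matching M W} {m : M} {w : W} :
    prank P μ (Sum.inr w) = wrank P w (some m) ↔ μ.toFun (Sum.inr w) = Sum.inl m := by
  obtain h | ⟨m', h⟩ := μ.woman_range w <;>
    simp [prank, wrank, Matching.partnerW, h, Fin.val_inj]

theorem prank_eq_urank_iff {P : Profile M W} {μ : Matching M W} {a : M ⊕ W} :
    prank P μ a = urank P a ↔ μ.toFun a = a := by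
  obtain m | w := a
  · obtain h | ⟨w, h⟩ := μ.man_range m <;>
      simp [prank, urank, mrank, Matching.partnerM, h, Fin.val_inj]
  · obtain h | ⟨m, h⟩ := μ.woman_range w <;>
      simp [prank, urank, wrank, Matching.partnerW, h, Fin.val_inj]

theorem prob_prank_inl_eq_mrank (P : Profile M W) (p : PMF (Matching M W)) (m : M) (w : W) :
    prob p {μ | prank P μ (Sum.inl m) = mrank P m (some w)} = pairProb p m w := by
  simp only [prank_inl_eq_mrank_iff, pairProb]

theorem prob_prank_inr_eq_wrank (P : Profile M W) (p : PMF (Matching M W)) (m : M) (w : W) :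
    prob p {μ | prank P μ (Sum.inr w) = wrank P w (some m)} = pairProb p m w := by
  simp only [prank_inr_eq_wrank_iff, pairProb, Matching.mutual_cond]

theorem exists_mrank_eq {P : Profile M W} {m : M} {k : ℕ} (hk : k ≠ 0)
    (hkm : k < mrank P m none) : ∃ w, mrank P m (some w) = k := by
  have hlt := hkm.trans_le (P.mpref m none).isLt
  obtain ⟨o, ho⟩ := (P.mpref m).surjective ⟨k - 1, by omega⟩
  have hrank : mrank P m o = k := by simp only [mrank, ho]; omega
  obtain _ | w := o
  exacts [absurd hrank hkm.ne', ⟨w, hrank⟩]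

theorem exists_wrank_eq {P : Profile M W} {w : W} {k : ℕ} (hk : k ≠ 0)
    (hkw : k < wrank P w none) : ∃ m, wrank P w (some m) = k := by
  have hlt := hkw.trans_le (P.wpref w none).isLt
  obtain ⟨o, ho⟩ := (P.wpref w).surjective ⟨k - 1, by omega⟩
  have hrank : wrank P w o = k := by simp only [wrank, ho]; omega
  obtain _ | m := o
  exacts [absurd hrank hkw.ne', ⟨m, hrank⟩]

theorem prob_prank_eq_of_pairProb_eq (P : Profile M W) {p : PMF (Matching M W)} {c : ℝ≥0∞}
    (hc : ∀ m w, pairProb p m w = c) {a : M ⊕ W} {k : ℕ} (hk : k ≠ 0) (hka : k < urank P a) :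
    prob p {μ | prank P μ a = k} = c := by
  cases a with
  | inl m =>
    obtain ⟨w, rfl⟩ := exists_mrank_eq hk hka
    rw [prob_prank_inl_eq_mrank, hc]
  | inr w =>
    obtain ⟨m, rfl⟩ := exists_wrank_eq hk hka
    rw [prob_prank_inr_eq_wrank, hc]

theorem cdfAt_zero (P : Profile M W) (p : PMF (Matching M W)) (a : M ⊕ W) :
    cdfAt P p a 0 = 0 := by
  have hpos (μ : Matching M W) : prank P μ a ≠ 0 := by cases a <;> exact Nat.succ_ne_zero _
  simp [cdfAt, prob, hpos]

theorem cdfAt_succ (P : Profile M W) (p : PMF (Matching M W)) (a : M ⊕ W) (n : ℕ) :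
    cdfAt P p a (n + 1) = cdfAt P p a n + prob p {μ | prank P μ a = n + 1} := by
  simp only [cdfAt, Nat.le_succ_iff, Set.ofPred_or]
  exact prob_union p (Set.disjoint_left.2 fun μ (h : _ ≤ n) (h' : _ = n + 1) ↦ by omega)

theorem cdfAt_one (P : Profile M W) (p : PMF (Matching M W)) (a : M ⊕ W) :
    cdfAt P p a 1 = prob p {μ | prank P μ a = 1} := by
  rw [cdfAt_succ, cdfAt_zero, zero_add]

theorem cdfAt_inl_eq_sum_pairProb (P : Profile M W) {p : PMF (Matching M W)}
    (hp : ∀ μ ∈ p.support, μ.IsPerfect) (m : M) (n : ℕ) :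
    cdfAt P p (Sum.inl m) n = ∑ w with mrank P m (some w) ≤ n, pairProb p m w := by
  rw [sum_pairProb_man]
  refine prob_congr fun μ hμ ↦ ?_
  obtain ⟨w, hw⟩ := (μ.man_range m).resolve_left (hp μ hμ _)
  simp [hw, prank_inl_eq_mrank_iff.2 hw]

theorem cdfAt_inr_eq_sum_pairProb (P : Profile M W) {p : PMF (Matching M W)}
    (hp : ∀ μ ∈ p.support, μ.IsPerfect) (w : W) (n : ℕ) :
    cdfAt P p (Sum.inr w) n = ∑ m with wrank P w (some m) ≤ n, pairProb p m w := by
  rw [sum_pairProb_woman]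
  refine prob_congr fun μ hμ ↦ ?_
  obtain ⟨m, hm⟩ := (μ.woman_range w).resolve_left (hp μ hμ _)
  simp [hm, prank_inr_eq_wrank_iff.2 hm]

theorem cdfAt_eq_of_pairProb_eq (P : Profile M W) {p q : PMF (Matching M W)}
    (hp : ∀ μ ∈ p.support, μ.IsPerfect) (hq : ∀ μ ∈ q.support, μ.IsPerfect)
    (hpq : ∀ m w, pairProb p m w = pairProb q m w) : cdfAt P p = cdfAt P q := by
  funext a n
  cases a with
  | inl m => simp only [cdfAt_inl_eq_sum_pairProb P hp, cdfAt_inl_eq_sum_pairProb P hq, hpq]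
  | inr w => simp only [cdfAt_inr_eq_sum_pairProb P hp, cdfAt_inr_eq_sum_pairProb P hq, hpq]

/-- Profiles at which every agent ranks remaining unmatched last, that is, one rank below the
whole opposite side. -/
structure UnmatchedLast (P : Profile M W) : Prop where
  man : ∀ m, mrank P m none = Fintype.card W + 1
  woman : ∀ w, wrank P w none = Fintype.card M + 1

variable {P : Profile M W}

theorem UnmatchedLast.prank_lt_urank_iff (hP : UnmatchedLast P) {μ : Matching M W} {a : M ⊕ W} :
    prank P μ a < urank P a ↔ μ.toFun a ≠ a := by
  have hle : prank P μ a ≤ urank P a := by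
    cases a with
    | inl m => exact (P.mpref m (μ.partnerM m)).isLt.trans_eq (hP.man m).symm
    | inr w => exact (P.wpref w (μ.partnerW w)).isLt.trans_eq (hP.woman w).symm
  rw [hle.lt_iff_ne, Ne, prank_eq_urank_iff]

theorem UnmatchedLast.cdfAt_eq_one_iff (hP : UnmatchedLast P) {p : PMF (Matching M W)}
    {a : M ⊕ W} {n : ℕ} (hn : n + 1 = urank P a) :
    cdfAt P p a n = 1 ↔ ∀ μ ∈ p.support, μ.toFun a ≠ a := by
  simp only [cdfAt, prob_eq_one_iff, Set.mem_ofPred_eq, ← hP.prank_lt_urank_iff, ← hn,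
    Nat.lt_succ_iff]

end Rank

section Dominance

variable {M W : Type*} [Fintype M] [Fintype W] {P : Profile M W} {q u : PMF (Matching M W)}

/-- At `P`, every agent's rank distribution under the random matching `q` weakly first-order
stochastically dominates the one under `u`. -/
def WeaklyDominates (P : Profile M W) (q u : PMF (Matching M W)) : Prop :=
  ∀ a n, cdfAt P u a n ≤ cdfAt P q a n

theorem WeaklyDominates.isPerfect (hdom : WeaklyDominates P q u) (hP : UnmatchedLast P)
    (hu : ∀ μ ∈ u.support, μ.IsPerfect) : ∀ μ ∈ q.support, μ.IsPerfect := by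
  intro μ hμ a
  obtain ⟨n, hn⟩ : ∃ n, n + 1 = urank P a := by cases a <;> exact ⟨_, rfl⟩
  have hua : cdfAt P u a n = 1 := (hP.cdfAt_eq_one_iff hn).2 fun ν hν ↦ hu ν hν a
  exact (hP.cdfAt_eq_one_iff hn).1
    (le_antisymm (prob_le_one q _) (hua.symm.trans_le (hdom a n))) μ hμ

theorem WeaklyDominates.prob_prank_eq_one_eq (hdom : WeaklyDominates P q u) {a b : M ⊕ W} {n : ℕ}
    (hab : ∀ μ : Matching M W, prank P μ a = 1 ↔ prank P μ b = n + 1)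
    (hb : cdfAt P u b (n + 1) = 1) :
    prob q {μ | prank P μ a = 1} = prob u {μ | prank P μ a = 1} := by
  refine le_antisymm ?_ (by simpa only [cdfAt_one] using hdom a 1)
  simp only [hab]
  have hfin : cdfAt P q b n ≠ ⊤ := prob_ne_top q _
  rw [← ENNReal.add_le_add_iff_left hfin]
  calc cdfAt P q b n + prob q {μ | prank P μ b = n + 1}
      = cdfAt P q b (n + 1) := (cdfAt_succ P q b n).symm
    _ ≤ cdfAt P u b (n + 1) := (prob_le_one q _).trans_eq hb.symm
    _ = cdfAt P u b n + prob u {μ | prank P μ b = n + 1} := cdfAt_succ P u b n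
    _ ≤ cdfAt P q b n + prob u {μ | prank P μ b = n + 1} := by gcongr; exact hdom b n

/-- One of `m` and `w` ranks the other first and is ranked last in return, among partners: just
above remaining unmatched. -/
def IsOpposed (P : Profile M W) (m : M) (w : W) : Prop :=
  (mrank P m (some w) = 1 ∧ wrank P w (some m) + 1 = wrank P w none) ∨
    (wrank P w (some m) = 1 ∧ mrank P m (some w) + 1 = mrank P m none)

theorem WeaklyDominates.pairProb_eq_of_isOpposed (hdom : WeaklyDominates P q u)
    (hP : UnmatchedLast P) (hu : ∀ μ ∈ u.support, μ.IsPerfect) {m : M} {w : W}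
    (hmw : IsOpposed P m w) : pairProb q m w = pairProb u m w := by
  have hiff (μ : Matching M W) : prank P μ (Sum.inl m) = mrank P m (some w) ↔
      prank P μ (Sum.inr w) = wrank P w (some m) := by
    rw [prank_inl_eq_mrank_iff, prank_inr_eq_wrank_iff, μ.mutual_cond]
  obtain ⟨hfirst, hlast⟩ | ⟨hfirst, hlast⟩ := hmw
  · rw [← prob_prank_inl_eq_mrank P q, ← prob_prank_inl_eq_mrank P u, hfirst]
    rw [hfirst] at hiff
    exact hdom.prob_prank_eq_one_eq hiff ((hP.cdfAt_eq_one_iff hlast).2 fun ν hν ↦ hu ν hν _)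
  · rw [← prob_prank_inr_eq_wrank P q, ← prob_prank_inr_eq_wrank P u, hfirst]
    rw [hfirst] at hiff
    exact hdom.prob_prank_eq_one_eq (fun μ ↦ (hiff μ).symm)
      ((hP.cdfAt_eq_one_iff hlast).2 fun ν hν ↦ hu ν hν _)

end Dominance

section ThreeByThree

-- Each step below finds a row or column in which a single entry is still undetermined: the five
-- remaining positions, as edges between rows and columns, form a tree.
theorem matrix_three_ext_of_sum_eq {R : Type*} [AddCancelCommMonoid R]
    {A B : Matrix (Fin 3) (Fin 3) R} (hrow : ∀ i, ∑ j, A i j = ∑ j, B i j)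
    (hcol : ∀ j, ∑ i, A i j = ∑ i, B i j) (h00 : A 0 0 = B 0 0) (h11 : A 1 1 = B 1 1)
    (h21 : A 2 1 = B 2 1) (h22 : A 2 2 = B 2 2) : A = B := by
  simp only [Fin.sum_univ_three] at hrow hcol
  have h20 : A 2 0 = B 2 0 := by grind
  have h01 : A 0 1 = B 0 1 := by grind
  have h10 : A 1 0 = B 1 0 := by grind
  have h02 : A 0 2 = B 0 2 := by grind
  have h12 : A 1 2 = B 1 2 := by grind
  ext i j
  fin_cases i <;> fin_cases j <;> assumption

theorem exists_filter_apply_eq_pair_of_sign_ne :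
    ∀ e f : Equiv.Perm (Fin 3), Equiv.Perm.sign e ≠ Equiv.Perm.sign f →
      ∃ i, ({g | g i = e i} : Finset (Equiv.Perm (Fin 3))) = {e, f} := by
  decide

variable {P : Profile (Fin 3) (Fin 3)} {p q u : PMF (Matching (Fin 3) (Fin 3))}

theorem apply_matchingOf_eq_of_sign_eq (hp : ∀ μ ∈ p.support, μ.IsPerfect) {c : ℝ≥0∞}
    (hc : ∀ m w, pairProb p m w = c) {e f : Equiv.Perm (Fin 3)}
    (hef : Equiv.Perm.sign e = Equiv.Perm.sign f) : p (matchingOf e) = p (matchingOf f) := by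
  have hadd {g h : Equiv.Perm (Fin 3)} (hgh : Equiv.Perm.sign g ≠ Equiv.Perm.sign h) :
      p (matchingOf g) + p (matchingOf h) = c := by
    obtain ⟨i, hi⟩ := exists_filter_apply_eq_pair_of_sign_ne g h hgh
    rw [← hc i (g i), pairProb_eq_sum_equiv hp, hi, Finset.sum_pair (ne_of_apply_ne _ hgh)]
  have hodd : Equiv.Perm.sign f ≠ Equiv.Perm.sign (Equiv.swap 0 1 * f) := by
    simp [Equiv.Perm.sign_mul]
  exact (ENNReal.add_left_inj (p.apply_ne_top _)).1 ((hadd (hef ▸ hodd)).trans (hadd hodd).symm)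

theorem WeaklyDominates.pairProb_eq_of_four_isOpposed (hdom : WeaklyDominates P q u)
    (hP : UnmatchedLast P) (h00 : IsOpposed P 0 0) (h11 : IsOpposed P 1 1)
    (h21 : IsOpposed P 2 1) (h22 : IsOpposed P 2 2) (hu : ∀ μ ∈ u.support, μ.IsPerfect)
    (m w : Fin 3) : pairProb q m w = pairProb u m w := by
  have hq := hdom.isPerfect hP hu
  have hrow {p : PMF (Matching (Fin 3) (Fin 3))} (hp : ∀ μ ∈ p.support, μ.IsPerfect) (i) :
      ∑ j, (pairProb p i j).toNNReal = 1 := by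
    rw [← ENNReal.toNNReal_sum fun _ _ ↦ pairProb_ne_top, sum_pairProb_row hp,
      ENNReal.toNNReal_one]
  have hcol {p : PMF (Matching (Fin 3) (Fin 3))} (hp : ∀ μ ∈ p.support, μ.IsPerfect) (j) :
      ∑ i, (pairProb p i j).toNNReal = 1 := by
    rw [← ENNReal.toNNReal_sum fun _ _ ↦ pairProb_ne_top, sum_pairProb_col hp,
      ENNReal.toNNReal_one]
  have hopp {i j : Fin 3} (hij : IsOpposed P i j) :
      (pairProb q i j).toNNReal = (pairProb u i j).toNNReal :=
    congrArg ENNReal.toNNReal (hdom.pairProb_eq_of_isOpposed hP hu hij)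
  have hmatrix := matrix_three_ext_of_sum_eq (fun i ↦ (hrow hq i).trans (hrow hu i).symm)
    (fun j ↦ (hcol hq j).trans (hcol hu j).symm) (hopp h00) (hopp h11) (hopp h21) (hopp h22)
  exact (ENNReal.toNNReal_eq_toNNReal_iff' pairProb_ne_top pairProb_ne_top).1
    (congrFun₂ hmatrix m w)

end ThreeByThree

theorem uniform_is_undominated_example1_general (P : Profile (Fin 3) (Fin 3))
    (hP : UnmatchedLast P) (h00 : IsOpposed P 0 0) (h11 : IsOpposed P 1 1)
    (h21 : IsOpposed P 2 1) (h22 : IsOpposed P 2 2)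
    (u q : PMF (Matching (Fin 3) (Fin 3)))
    (hu : ∀ μ, u μ = if ∀ a, μ.toFun a ≠ a then (6 : ℝ≥0∞)⁻¹ else 0)
    (hdom : WeaklyDominates P q u) :
    (q (matchingOf (Equiv.refl (Fin 3))) = q (matchingOf (finRotate 3)) ∧
      q (matchingOf (finRotate 3)) = q (matchingOf ((finRotate 3).trans (finRotate 3)))) ∧
    (q (matchingOf (Equiv.swap 1 2)) = q (matchingOf (Equiv.swap 0 1)) ∧
      q (matchingOf (Equiv.swap 0 1)) = q (matchingOf (Equiv.swap 0 2))) ∧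
    (∀ (a : Fin 3 ⊕ Fin 3), ∀ k ∈ ({1, 2, 3} : Set ℕ),
      prob q {μ | prank P μ a = k} = (3 : ℝ≥0∞)⁻¹) ∧
    (∀ a : Fin 3 ⊕ Fin 3, ¬ SD (cdfAt P q a) (cdfAt P u a)) := by
  have hu_perfect : ∀ μ ∈ u.support, μ.IsPerfect := fun μ hμ ↦
    of_not_not fun h ↦ hμ ((hu μ).trans (if_neg h))
  have hu_const (e) : u (matchingOf e) = 6⁻¹ := (hu _).trans (if_pos (isPerfect_matchingOf e))
  have hq_perfect := hdom.isPerfect hP hu_perfect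
  have hqu := hdom.pairProb_eq_of_four_isOpposed hP h00 h11 h21 h22 hu_perfect
  have hq_pair (m w) : pairProb q m w = 3⁻¹ :=
    (hqu m w).trans (pairProb_of_uniform hu_perfect hu_const m w)
  have hurank (a) : urank P a = 4 := by
    cases a
    exacts [hP.man _, hP.woman _]
  refine ⟨⟨?_, ?_⟩, ⟨?_, ?_⟩, fun a k hk ↦ ?_, ?_⟩
  iterate 4 exact apply_matchingOf_eq_of_sign_eq hq_perfect hq_pair (by decide)
  · apply prob_prank_eq_of_pairProb_eq P hq_pair <;> obtain rfl | rfl | rfl := hk <;>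
      simp [hurank]
  · rintro a ⟨-, n, hn⟩
    exact hn.ne (by rw [cdfAt_eq_of_pairProb_eq P hq_perfect hu_perfect hqu])

/-- For the profile `P` of Example 1, any random matching `q`
supported on perfect matchings whose induced rank distribution weakly first-order
stochastically dominates, for every agent, the one induced by the uniform random
perfect matching `u`, must put equal probability on each of the two orbits of
matchings listed; consequently every agent gets each of his/her first, second and
third choices with probability exactly `1/3`, and `q` strictly dominates the
uniform random matching for no agent. -/
theorem uniform_is_undominated_example1 (P : Profile (Fin 3) (Fin 3))
    (hm1 : MRanks P 0 ![1, 2, 3] 4) (hm2 : MRanks P 1 ![1, 3, 2] 4)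
    (hm3 : MRanks P 2 ![2, 1, 3] 4)
    (hw1 : WRanks P 0 ![3, 2, 1] 4) (hw2 : WRanks P 1 ![2, 1, 3] 4)
    (hw3 : WRanks P 2 ![3, 2, 1] 4)
    (u q : PMF (Matching (Fin 3) (Fin 3)))
    (hu : ∀ μ, u μ = if ∀ a, μ.toFun a ≠ a then (6 : ℝ≥0∞)⁻¹ else 0)
    (hq : ∀ μ, ¬ (∀ a, μ.toFun a ≠ a) → q μ = 0)
    (hdom : ∀ (a : Fin 3 ⊕ Fin 3) (n : ℕ), cdfAt P u a n ≤ cdfAt P q a n) :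
    (q (matchingOf (Equiv.refl (Fin 3))) = q (matchingOf (finRotate 3)) ∧
      q (matchingOf (finRotate 3)) = q (matchingOf ((finRotate 3).trans (finRotate 3)))) ∧
    (q (matchingOf (Equiv.swap 1 2)) = q (matchingOf (Equiv.swap 0 1)) ∧
      q (matchingOf (Equiv.swap 0 1)) = q (matchingOf (Equiv.swap 0 2))) ∧
    (∀ (a : Fin 3 ⊕ Fin 3), ∀ k ∈ ({1, 2, 3} : Set ℕ),
      prob q {μ | prank P μ a = k} = (3 : ℝ≥0∞)⁻¹) ∧
    (∀ a : Fin 3 ⊕ Fin 3, ¬ SD (cdfAt P q a) (cdfAt P u a)) := by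
  have hP : UnmatchedLast P :=
    ⟨by simp [Fin.forall_fin_succ, hm1.2, hm2.2, hm3.2],
      by simp [Fin.forall_fin_succ, hw1.2, hw2.2, hw3.2]⟩
  exact uniform_is_undominated_example1_general P hP
    (.inl ⟨hm1.1 0, by rw [hw1.1 0, hw1.2]; rfl⟩) (.inr ⟨hw2.1 1, by rw [hm2.1 1, hm2.2]; rfl⟩)
    (.inl ⟨hm3.1 1, by rw [hw2.1 2, hw2.2]; rfl⟩) (.inr ⟨hw3.1 2, by rw [hm3.1 2, hm3.2]; rfl⟩)
    u q hu hdom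

end Unraveling
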